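/- arXiv:2602.08035 — 2 statements merged into one kernel-verified Lean document; each statement's English description precedes it below -/
import Mathlib

section
/- Suppose the distributional preference ≿ satisfies the upper-bound property. Then for every S ⊆ 𝒮, every S' ∈ F(S), and every S'' ∈ NW(S) \ F(S), we have S' ≻ S''. -/
open Finset

variable {α : Type*}

/-- Strict part of a distributional preference. -/
def strictPref (pref : Finset α → Finset α → Prop) (A B : Finset α) : Prop :=
  pref A B ∧ ¬ pref B A

/-- Indifference part of a distributional preference. -/
def indiffPref (pref : Finset α → Finset α → Prop) (A B : Finset α) : Prop :=
  pref A B ∧ pref B A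

/-- Incomparability under a distributional preference. -/
def incomparable (pref : Finset α → Finset α → Prop) (A B : Finset α) : Prop :=
  ¬ pref A B ∧ ¬ pref B A

/-- `NW q S` is the collection of non-wasteful subsets of `S`. -/
def NW (q : ℕ) (S : Finset α) : Set (Finset α) :=
  {T | T ⊆ S ∧ T.card = min q S.card}

/-- The frontier of `S`: non-wasteful subsets undominated w.r.t. the preference. -/
def frontierSet (pref : Finset α → Finset α → Prop) (q : ℕ) (S : Finset α) :
    Set (Finset α) :=
  {T | T ∈ NW q S ∧ ∀ T' ∈ NW q S, ¬ strictPref pref T' T}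

/-- The upper-bound property of a distributional preference. -/
def upperBoundProperty [DecidableEq α] (pref : Finset α → Finset α → Prop) (q : ℕ) : Prop :=
  ∀ S S' : Finset α, S.card = q → S'.card = q → incomparable pref S S' →
    ∃ S'' ∈ NW q (S ∪ S'), strictPref pref S'' S ∨ strictPref pref S'' S'

/-- The maximizer property of a distributional preference. -/
def maximizerProperty [DecidableEq α] (pref : Finset α → Finset α → Prop) (q : ℕ) : Prop :=
  ∀ S S' : Finset α, S ≠ S' → S.card = q → S'.card = q →
    (∀ S'' ∈ NW q (S ∪ S'), pref S S'' ∧ pref S' S'') →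
    ∃ s ∈ S \ S', ∃ s' ∈ S' \ S,
      indiffPref pref (S.erase s ∪ {s'}) S ∧ indiffPref pref (S'.erase s' ∪ {s}) S'

/-- The improvement property of a distributional preference. -/
def improvementProperty [DecidableEq α] (pref : Finset α → Finset α → Prop) (q : ℕ) : Prop :=
  ∀ S S' : Finset α, S.card = q → S'.card = q → ∀ s ∈ S \ S',
    (∀ S'' ∈ NW q (S ∪ S'), s ∉ S'' → strictPref pref S S'') →
    (∀ S'' ∈ NW q (S ∪ S'), s ∈ S'' → pref S S'') →
    ∃ s' ∈ S' \ S, strictPref pref (S'.erase s' ∪ {s}) S'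

/-- A choice rule is non-wasteful. -/
def nonWasteful (q : ℕ) (Ch : Finset α → Finset α) : Prop :=
  ∀ S : Finset α, (Ch S).card = min q S.card

/-- A choice rule promotes the distributional preference. -/
def promotesPref (pref : Finset α → Finset α → Prop) (Ch : Finset α → Finset α) : Prop :=
  ∀ S : Finset α, ∀ S' ⊆ S, S'.card = (Ch S).card → ¬ strictPref pref S' (Ch S)

/-- A choice rule guarantees no justified envy with respect to priority ranking `π`. -/
def noJustifiedEnvy [DecidableEq α] (pref : Finset α → Finset α → Prop)
    (π : α → α → Prop) (Ch : Finset α → Finset α) : Prop :=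
  ∀ S : Finset α, ∀ s ∈ Ch S, ∀ s' ∈ S \ Ch S,
    pref ((Ch S).erase s ∪ {s'}) (Ch S) → π s s'

/-- Path independence of a choice rule. -/
def pathIndependent [DecidableEq α] (Ch : Finset α → Finset α) : Prop :=
  ∀ S S' : Finset α, Ch (S ∪ S') = Ch (Ch S ∪ S')

/-- Consistency of a choice rule. -/
def consistentRule [DecidableEq α] (Ch : Finset α → Finset α) : Prop :=
  ∀ S : Finset α, ∀ s ∈ S, s ∉ Ch S → Ch (S.erase s) = Ch S

/-- Substitutability of a choice rule. -/
def substitutableRule [DecidableEq α] (Ch : Finset α → Finset α) : Prop :=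
  ∀ S : Finset α, ∀ s ∈ S, ∀ s' ∈ S, s ≠ s' → s ∈ Ch S → s ∈ Ch (S.erase s')

/-- `l` lists the elements of `A` in strictly decreasing `π`-priority. -/
def descList [DecidableEq α] (π : α → α → Prop) (A : Finset α) (l : List α) : Prop :=
  l.Pairwise π ∧ l.Nodup ∧ l.toFinset = A

/-- `A` priority dominates `B` with respect to `π`. -/
def priorityDominates [DecidableEq α] (π : α → α → Prop) (A B : Finset α) : Prop :=
  B.card ≤ A.card ∧
  ∀ la lb : List α, descList π A la → descList π B lb →
    ∀ (k : ℕ) (ha : k < la.length) (hb : k < lb.length),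
      la.get ⟨k, ha⟩ = lb.get ⟨k, hb⟩ ∨ π (la.get ⟨k, ha⟩) (lb.get ⟨k, hb⟩)

/-- The revealed preference axiom for a choice rule: no revealed-priority cycles. -/
def revealedPrefAxiom [DecidableEq α] (pref : Finset α → Finset α → Prop)
    (Ch : Finset α → Finset α) : Prop :=
  ¬ ∃ (K : ℕ) (s : ℕ → α) (T : ℕ → Finset α), 0 < K ∧ s K = s 0 ∧
    ∀ k < K, s k ∈ Ch (T k) ∧ s (k + 1) ∈ T k \ Ch (T k) ∧
      pref ((Ch (T k)).erase (s k) ∪ {s (k + 1)}) (Ch (T k))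

/-!
A set off the frontier is strictly dominated by a frontier set `T`, since `NW q S` is finite and
strict preference is transitive. Two distinct frontier sets `S'`, `T` have exactly `q` elements; if
they were incomparable, the upper-bound property would yield a set in `NW q (S' ∪ T) ⊆ NW q S`
strictly dominating one of them. As neither strictly dominates the other, they are indifferent,
so `S'` strictly dominates whatever `T` does.
-/

section

variable {q : ℕ} {pref : Finset α → Finset α → Prop} {S A B C U : Finset α}

theorem strictPref_of_pref_of_strictPref [IsTrans (Finset α) pref]
    (hAB : pref A B) (hBC : strictPref pref B C) : strictPref pref A C :=
  ⟨_root_.trans hAB hBC.1, fun hCA => hBC.2 (_root_.trans hCA hAB)⟩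

instance isStrictOrder_strictPref [IsTrans (Finset α) pref] :
    IsStrictOrder (Finset α) (strictPref pref) where
  irrefl _ h := h.2 h.1
  trans _ _ _ hAB hBC := strictPref_of_pref_of_strictPref hAB.1 hBC

theorem NW_finite (q : ℕ) (S : Finset α) : (NW q S).Finite :=
  S.powerset.finite_toSet.subset fun _ hA => mem_powerset.2 hA.1

theorem NW_subset_NW (hA : A ∈ NW q S) (hAU : A ⊆ U) (hUS : U ⊆ S) : NW q U ⊆ NW q S := by
  rintro B ⟨hBU, hB⟩
  refine ⟨hBU.trans hUS, ?_⟩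
  have hcard : A.card = min q S.card := hA.2
  have hAU_card := card_le_card hAU
  have hUS_card := card_le_card hUS
  omega

theorem card_eq_of_mem_NW_of_ne (hA : A ∈ NW q S) (hB : B ∈ NW q S) (hAB : A ≠ B) :
    A.card = q := by
  refine hA.2.trans (min_eq_left ?_)
  by_contra! hS
  have eq_S : ∀ T ∈ NW q S, T = S := fun T hT =>
    eq_of_subset_of_card_le hT.1 (hT.2.trans (min_eq_right hS.le)).ge
  exact hAB ((eq_S A hA).trans (eq_S B hB).symm)

theorem mem_frontierSet_or_exists_strictPref [IsTrans (Finset α) pref] (hA : A ∈ NW q S) :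
    A ∈ frontierSet pref q S ∨ ∃ T ∈ frontierSet pref q S, strictPref pref T A := by
  have hwf : (NW q S).WellFoundedOn (strictPref pref) := (NW_finite q S).wellFoundedOn
  apply hwf.induction hA
  intro A hA ih
  by_cases hdom : ∃ B ∈ NW q S, strictPref pref B A
  · obtain ⟨B, hB, hBA⟩ := hdom
    rcases ih B hB hBA with hBF | ⟨T, hT, hTB⟩
    · exact .inr ⟨B, hBF, hBA⟩
    · exact .inr ⟨T, hT, _root_.trans hTB hBA⟩
  · push Not at hdom
    exact .inl ⟨hA, hdom⟩

theorem upperBoundProperty.not_incomparable [DecidableEq α] (hub : upperBoundProperty pref q)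
    (hA : A ∈ frontierSet pref q S) (hB : B ∈ frontierSet pref q S) (hAB : A ≠ B) :
    ¬ incomparable pref A B := by
  intro hinc
  obtain ⟨C, hC, hdom⟩ := hub A B (card_eq_of_mem_NW_of_ne hA.1 hB.1 hAB)
    (card_eq_of_mem_NW_of_ne hB.1 hA.1 hAB.symm) hinc
  have hCS : C ∈ NW q S :=
    NW_subset_NW hA.1 subset_union_left (union_subset hA.1.1 hB.1.1) hC
  exact hdom.elim (hA.2 C hCS) (hB.2 C hCS)

theorem upperBoundProperty.pairwise_indiffPref [DecidableEq α] (hub : upperBoundProperty pref q)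
    (S : Finset α) : (frontierSet pref q S).Pairwise (indiffPref pref) := by
  intro A hA B hB hne
  have hcomp : pref A B ∨ pref B A := by
    simpa only [incomparable, not_and_or, not_not] using hub.not_incomparable hA hB hne
  have pref_BA : pref A B → pref B A := fun hAB => by_contra fun hnot => hB.2 A hA.1 ⟨hAB, hnot⟩
  have pref_AB : pref B A → pref A B := fun hBA => by_contra fun hnot => hA.2 B hB.1 ⟨hBA, hnot⟩
  exact ⟨hcomp.elim id pref_AB, hcomp.elim pref_BA id⟩

theorem stmt2_general [DecidableEq α] [IsTrans (Finset α) pref]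
    (hub : upperBoundProperty pref q) {S' S'' : Finset α}
    (hS' : S' ∈ frontierSet pref q S) (hS'' : S'' ∈ NW q S \ frontierSet pref q S) :
    strictPref pref S' S'' := by
  obtain ⟨T, hT, hTS''⟩ := (mem_frontierSet_or_exists_strictPref hS''.1).resolve_left hS''.2
  obtain rfl | hne := eq_or_ne S' T
  · exact hTS''
  · exact strictPref_of_pref_of_strictPref (hub.pairwise_indiffPref S hS' hT hne).1 hTS''

end

/-- Under the upper-bound property, any frontier set strictly
dominates any non-wasteful set off the frontier. -/
theorem stmt2 {α : Type*} [Fintype α] [Nonempty α] [DecidableEq α]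
    (q : ℕ) (hq : 0 < q)
    (pref : Finset α → Finset α → Prop)
    (hrefl : ∀ A : Finset α, pref A A)
    (htrans : ∀ A B C : Finset α, pref A B → pref B C → pref A C)
    (hub : upperBoundProperty pref q) :
    ∀ S : Finset α, ∀ S' ∈ frontierSet pref q S,
      ∀ S'' ∈ NW q S \ frontierSet pref q S, strictPref pref S' S'' := by
  have : IsTrans (Finset α) pref := ⟨htrans⟩
  exact fun _ _ hS' _ hS'' => stmt2_general hub hS' hS''
end

section
/- If a choice rule Ch guarantees no justified envy with respect to some priority ranking π on 𝒮, then Ch satisfies the revealed preference axiom. -/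
open Finset

variable {α : Type*}

theorem transGen_of_forall_lt_succ {r : α → α → Prop} {f : ℕ → α} {n : ℕ} (hn : 0 < n)
    (h : ∀ k < n, r (f k) (f (k + 1))) : Relation.TransGen r (f 0) (f n) :=
  have index_path : Relation.TransGen (fun i j ↦ r (f i) (f j)) 0 n :=
    transGen_of_succ_of_lt _ (fun k hk ↦ h k hk.2) hn
  index_path.lift f le_rfl

section RevealedPriority

variable [DecidableEq α] {pref : Finset α → Finset α → Prop} {Ch : Finset α → Finset α}
  {π : α → α → Prop}

/-- The revealed priority relation of a choice rule: `s` is chosen over `s'` from some set although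
exchanging them would not hurt the distributional preference. Its cycles are what the revealed
preference axiom forbids. -/
def revealedPriority (pref : Finset α → Finset α → Prop) (Ch : Finset α → Finset α)
    (s s' : α) : Prop :=
  ∃ S : Finset α, s ∈ Ch S ∧ s' ∈ S \ Ch S ∧ pref ((Ch S).erase s ∪ {s'}) (Ch S)

theorem noJustifiedEnvy.revealedPriority_le (h : noJustifiedEnvy pref π Ch) :
    revealedPriority pref Ch ≤ π := by
  rintro s s' ⟨S, hs, hs', hpref⟩
  exact h S s hs s' hs' hpref

theorem revealedPrefAxiom_of_acyclic
    (h : ∀ s, ¬ Relation.TransGen (revealedPriority pref Ch) s s) :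
    revealedPrefAxiom pref Ch := by
  rintro ⟨K, s, T, hK, hclosed, hstep⟩
  have cycle : Relation.TransGen (revealedPriority pref Ch) (s 0) (s K) :=
    transGen_of_forall_lt_succ hK fun k hk ↦ ⟨T k, hstep k hk⟩
  exact h (s 0) (hclosed ▸ cycle)

theorem stmt11_general (hπ : ∀ s, ¬ Relation.TransGen π s s) (hne : noJustifiedEnvy pref π Ch) :
    revealedPrefAxiom pref Ch :=
  revealedPrefAxiom_of_acyclic fun s cycle ↦
    hπ s (Relation.TransGen.mono hne.revealedPriority_le _ _ cycle)

end RevealedPriority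

/-- If a choice rule guarantees no justified envy with respect to
some priority ranking, then it satisfies the revealed preference axiom. -/
theorem stmt11 {α : Type*} [Fintype α] [Nonempty α] [DecidableEq α]
    (q : ℕ) (hq : 0 < q)
    (pref : Finset α → Finset α → Prop)
    (hrefl : ∀ A : Finset α, pref A A)
    (htrans : ∀ A B C : Finset α, pref A B → pref B C → pref A C)
    (Ch : Finset α → Finset α)
    (hsub : ∀ S : Finset α, Ch S ⊆ S) (hcard : ∀ S : Finset α, (Ch S).card ≤ q)
    (π : α → α → Prop) (hπ : IsStrictTotalOrder α π)
    (hne : noJustifiedEnvy pref π Ch) :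
    revealedPrefAxiom pref Ch :=
  stmt11_general (fun s cycle ↦ hπ.irrefl s (Relation.transGen_minimal le_rfl _ _ cycle)) hne
end
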